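/- Let n ≥ 1, let j ∈ {1,…,n}, let x = (x₁,…,xₙ) ∈ ℂⁿ with xⱼ ≠ 0, set x₀ = 1, and let y = (y₁,…,yₙ) ∈ ℂⁿ. Define φ : ℂ∖{0} → ℂⁿ × ℂⁿ whose first factor has the n coordinates t^{j−i} xᵢ / xⱼ for i ∈ {0,1,…,n}∖{j}, and whose second factor has the n coordinates (−t^{−j} xⱼ · Σ_{i=1}^{n} xᵢyᵢ) together with t^{i−j} xⱼ yᵢ for i ∈ {1,…,n}∖{j}. Then φ(t) tends to ((0,…,0),(0,…,0)) as t → 0 along nonzero values of t if and only if xᵢ = 0 for all i with j < i ≤ n and yᵢ = 0 for all i with 1 ≤ i ≤ j. (This computes the stable manifold Lⱼ of the fixed point eⱼ of the Hamiltonian torus action on T*ℙⁿ in the chart Vⱼ, giving Lⱼ ≅ ⊕_{i=1}^{n−j} O_{ℙʲ}(−1).) -/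

import Mathlib

open Filter Topology

theorem aux_pos (k : ℤ) (hk : 0 < k) (c : ℂ) :
    Tendsto (fun t : ℂ => t ^ k * c) (𝓝[≠] (0 : ℂ)) (𝓝 0) := by
  lift k to ℕ using hk.le
  have hk' : k ≠ 0 := by omega
  have h : Tendsto (fun t : ℂ => t ^ k * c) (𝓝 0) (𝓝 ((0 : ℂ) ^ k * c)) :=
    Continuous.tendsto (by fun_prop) 0
  rw [zero_pow hk', zero_mul] at h
  simpa using h.mono_left nhdsWithin_le_nhds

theorem aux_neg (k : ℤ) (hk : k < 0) (c : ℂ)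
    (h : Tendsto (fun t : ℂ => t ^ k * c) (𝓝[≠] (0 : ℂ)) (𝓝 0)) : c = 0 := by
  have h1 := (aux_pos (-k) (by omega) 1).mul h
  have h2 : Tendsto (fun _ : ℂ => c) (𝓝[≠] (0 : ℂ)) (𝓝 (0 * 0)) := by
    refine h1.congr' ?_
    filter_upwards [self_mem_nhdsWithin] with t ht
    have ht' : t ≠ 0 := ht
    rw [mul_one, ← mul_assoc, ← zpow_add₀ ht']
    simp
  simpa using tendsto_nhds_unique tendsto_const_nhds h2

/-- The stable manifold of the fixed point `eⱼ` of the Hamiltonian torus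
action on `T*ℙⁿ`, computed in the chart `Vⱼ` (here `x₀ = 1` and `xⱼ ≠ 0`).  Convergence of
the orbit `φ(t)` to the origin of the chart is stated coordinatewise (which is equivalent
to convergence in the finite product): the base coordinates are `t^(j-i) xᵢ/xⱼ` for
`i ∈ {0,…,n} \ {j}`, and the fibre coordinates are `-t^(-j) xⱼ ∑_{i=1}^n xᵢyᵢ` together
with `t^(i-j) xⱼ yᵢ` for `i ∈ {1,…,n} \ {j}`.  The limit is `0` iff `xᵢ = 0` for
`j < i ≤ n` and `yᵢ = 0` for `1 ≤ i ≤ j`. -/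
theorem stable_manifold_ej (n : ℕ) (hn : 1 ≤ n) (j : ℕ) (hj1 : 1 ≤ j) (hjn : j ≤ n)
    (x y : ℕ → ℂ) (hx0 : x 0 = 1) (hxj : x j ≠ 0) :
    ((∀ i : ℕ, i ≤ n → i ≠ j →
        Tendsto (fun t : ℂ => t ^ ((j : ℤ) - (i : ℤ)) * x i / x j) (𝓝[≠] (0 : ℂ)) (𝓝 0)) ∧
      Tendsto (fun t : ℂ => -(t ^ (-(j : ℤ))) * x j * ∑ i ∈ Finset.Icc 1 n, x i * y i)
        (𝓝[≠] (0 : ℂ)) (𝓝 0) ∧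
      (∀ i : ℕ, 1 ≤ i → i ≤ n → i ≠ j →
        Tendsto (fun t : ℂ => t ^ ((i : ℤ) - (j : ℤ)) * x j * y i) (𝓝[≠] (0 : ℂ)) (𝓝 0)))
    ↔ ((∀ i : ℕ, j < i → i ≤ n → x i = 0) ∧ (∀ i : ℕ, 1 ≤ i → i ≤ j → y i = 0)) := by
  have key : (∀ i : ℕ, j < i → i ≤ n → x i = 0) → (∀ i : ℕ, 1 ≤ i → i < j → y i = 0) →
      ∑ i ∈ Finset.Icc 1 n, x i * y i = x j * y j := by
    intro hx hy
    apply Finset.sum_eq_single_of_mem j (Finset.mem_Icc.2 ⟨hj1, hjn⟩)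
    intro i hi hij
    rw [Finset.mem_Icc] at hi
    rcases lt_or_gt_of_ne hij with h | h
    · rw [hy i hi.1 h, mul_zero]
    · rw [hx i h hi.2, zero_mul]
  constructor
  · rintro ⟨h1, h2, h3⟩
    have hx : ∀ i : ℕ, j < i → i ≤ n → x i = 0 := by
      intro i hi hin
      have h := h1 i hin hi.ne'
      simp only [mul_div_assoc] at h
      have := aux_neg _ (by omega) _ h
      simpa [hxj] using this
    have hy : ∀ i : ℕ, 1 ≤ i → i < j → y i = 0 := by
      intro i hi hij
      have h := h3 i hi (by omega) hij.ne
      simp only [mul_assoc] at h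
      have := aux_neg _ (by omega) _ h
      simpa [hxj] using this
    refine ⟨hx, fun i hi hij => ?_⟩
    rcases hij.lt_or_eq with h | rfl
    · exact hy i hi h
    · rw [key hx hy] at h2
      have h := h2.neg
      simp only [neg_mul, neg_neg, neg_zero, mul_assoc] at h
      have := aux_neg _ (by omega) _ h
      simpa [hxj] using this
  · rintro ⟨hx, hy⟩
    refine ⟨fun i hin hij => ?_, ?_, fun i hi hin hij => ?_⟩
    · rcases lt_or_gt_of_ne hij with h | h
      · simp only [mul_div_assoc]
        exact aux_pos _ (by omega) _
      · simp [hx i h hin]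
    · rw [key hx (fun i hi h => hy i hi h.le), hy j hj1 le_rfl]
      simp
    · rcases lt_or_gt_of_ne hij with h | h
      · simp [hy i hi h.le]
      · simp only [mul_assoc]
        exact aux_pos _ (by omega) _
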